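/- Let X, Y, A, B be finite nonempty sets. For a linear map Γ : M_{X×Y} → M_{A×B} the following are equivalent: (i) Γ is a quantum commuting QNS correlation, i.e. there exist a complex Hilbert space H, a unit vector ξ ∈ H, and stochastic operator matrices E = (E_{x,x',a,a'}) over (X,A) and F = (F_{y,y',b,b'}) over (Y,B), both acting on H, such that every E_{x,x',a,a'} commutes with every F_{y,y',b,b'} and Γ(ε_{x,x'} ⊗ ε_{y,y'}) = Σ_{a,a'∈A, b,b'∈B} ⟨E_{x,x',a,a'} F_{y,y',b,b'} ξ, ξ⟩ ε_{a,a'} ⊗ ε_{b,b'}; (ii) there exist complex Hilbert spaces H, K, L, a block operator isometry U = (U_{a,x}) over (X,A) with entries in B(K,L), a block operator isometry V = (V_{b,y}) over (Y,B) with entries in B(H,K), such that U_{a,x}* U_{a',x'} commutes with V_{b,y} V_{b',y'}* for all x,x' ∈ X, y,y' ∈ Y, a,a' ∈ A, b,b' ∈ B, and a unit vector ζ ∈ H, such that Γ(ε_{x,x'} ⊗ ε_{y,y'}) = Σ_{a,a'∈A, b,b'∈B} ⟨U_{a',x'} V_{b',y'} ζ, U_{a,x} V_{b,y} ζ⟩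 ε_{a,a'} ⊗ ε_{b,b'}. -/

import Mathlib

open Matrix ContinuousLinearMap
open scoped Kronecker ComplexOrder ComplexInnerProductSpace

/-- A bundled complex Hilbert space. -/
structure HilbertC : Type 1 where
  carrier : Type
  [nacg : NormedAddCommGroup carrier]
  [ips : InnerProductSpace ℂ carrier]
  [cs : CompleteSpace carrier]

attribute [instance] HilbertC.nacg HilbertC.ips HilbertC.cs

/-- A stochastic operator matrix over `(X, A)` acting on a Hilbert space `H`:
the block operator matrix on `ℂ^{X×A} ⊗ H` is positive, and the partial trace
over `A` is the identity. -/
def IsStochasticOperatorMatrix {X A : Type*} [Fintype X] [Fintype A] [DecidableEq X]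
    {H : Type*} [NormedAddCommGroup H] [InnerProductSpace ℂ H]
    (E : X → X → A → A → (H →L[ℂ] H)) : Prop :=
  (∀ ξ : X × A → H,
    0 ≤ ∑ p : X × A, ∑ q : X × A, (⟪ξ p, (E p.1 q.1 p.2 q.2) (ξ q)⟫ : ℂ)) ∧
  (∀ x x' : X, ∑ a : A, E x x' a a = if x = x' then 1 else 0)

/-!
If the entries of two stochastic operator matrices are Gram products, `E = U⋆U'` and `F = V⋆V'`,
then the two correlation formulas agree as soon as each `V` intertwines the entries of `E` on its
domain with the operators `U⋆U'` on its codomain, and the same relation yields both commutation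
conditions.

From (i) to (ii), the block operator `F` is positive on `H ⊗ ℂ^{Y×B}`, and the columns of its square
root `S` satisfy `V⋆V' = F`. An operator commuting with the entries of `F` has an ampliation
commuting with `S`, so the columns intertwine it with its ampliation. Factoring `E = W⋆W'` in the
same way, `U = W ⊗ 1` has Gram products `E ⊗ 1`.

From (ii) to (i), fix `y₀` and put `Φ(T) = ∑ b, V(b, y₀)⋆ T V(b, y₀)`, a unital completely positive
map. Semi-commutation moves `V V(b, y₀)⋆` through `T = U⋆U'`, so every `V` intertwines `Φ(T)` with
`T`, and `E = Φ(U⋆U')` works.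
-/

section Intertwines

variable {𝕜 H K L : Type*} [RCLike 𝕜]
  [NormedAddCommGroup H] [InnerProductSpace 𝕜 H] [CompleteSpace H]
  [NormedAddCommGroup K] [InnerProductSpace 𝕜 K] [CompleteSpace K]
  [NormedAddCommGroup L] [InnerProductSpace 𝕜 L] [CompleteSpace L]

/-- `V` intertwines `S` with `T`, and also `S⋆` with `T⋆`; the second relation is recorded in its
adjoint form `S V⋆ = V⋆ T`. -/
structure Intertwines (V : H →L[𝕜] K) (S : H →L[𝕜] H) (T : K →L[𝕜] K) : Prop where
  comp_eq : V ∘L S = T ∘L V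
  comp_adjoint_eq : S ∘L adjoint V = adjoint V ∘L T

namespace Intertwines

lemma of_commute_of_isSelfAdjoint {R T : H →L[𝕜] H} (hRT : Commute R T)
    (hR : IsSelfAdjoint R) : Intertwines R T T where
  comp_eq := hRT.eq
  comp_adjoint_eq := by rw [hR.adjoint_eq]; exact hRT.symm.eq

lemma comp {W : K →L[𝕜] L} {V : H →L[𝕜] K} {R : H →L[𝕜] H} {S : K →L[𝕜] K} {T : L →L[𝕜] L}
    (hW : Intertwines W S T) (hV : Intertwines V R S) : Intertwines (W ∘L V) R T where
  comp_eq := by rw [comp_assoc, hV.comp_eq, ← comp_assoc, hW.comp_eq, comp_assoc]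
  comp_adjoint_eq := by
    rw [adjoint_comp, ← comp_assoc, hV.comp_adjoint_eq, comp_assoc, hW.comp_adjoint_eq, comp_assoc]

variable {V V' : H →L[𝕜] K} {S : H →L[𝕜] H} {T : K →L[𝕜] K}

lemma commute_adjoint_comp (hV : Intertwines V S T) (hV' : Intertwines V' S T) :
    Commute S (adjoint V ∘L V') :=
  calc S ∘L adjoint V ∘L V'
    _ = adjoint V ∘L T ∘L V' := by rw [← comp_assoc, hV.comp_adjoint_eq, comp_assoc]
    _ = (adjoint V ∘L V') ∘L S := by rw [← hV'.comp_eq, comp_assoc]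

lemma commute_comp_adjoint (hV : Intertwines V S T) (hV' : Intertwines V' S T) :
    Commute T (V ∘L adjoint V') :=
  calc T ∘L V ∘L adjoint V'
    _ = V ∘L S ∘L adjoint V' := by rw [← comp_assoc, ← hV.comp_eq, comp_assoc]
    _ = (V ∘L adjoint V') ∘L T := by rw [hV'.comp_adjoint_eq, comp_assoc]

lemma inner_comp_adjoint_comp {U U' : K →L[𝕜] L} (hV : Intertwines V S (adjoint U ∘L U'))
    (ζ : H) : inner 𝕜 ζ ((S ∘L adjoint V ∘L V') ζ) = inner 𝕜 (U (V ζ)) (U' (V' ζ)) := by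
  rw [← comp_assoc, hV.comp_adjoint_eq]
  simp only [ContinuousLinearMap.comp_apply, adjoint_inner_right]

end Intertwines

end Intertwines

section BlockOperators

variable {𝕜 H K L I J : Type*} [RCLike 𝕜] [Fintype I]
  [NormedAddCommGroup H] [InnerProductSpace 𝕜 H]
  [NormedAddCommGroup K] [InnerProductSpace 𝕜 K]
  [NormedAddCommGroup L] [InnerProductSpace 𝕜 L]

variable (I) in
/-- The ampliation `T ⊗ 1` of `T`, with `H ⊗ ℂ^I` encoded as the `ℓ²`-sum of `I` copies of `H`. -/
noncomputable def ampliation :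
    (H →L[𝕜] K) →ₗ[𝕜] (PiLp 2 (fun _ : I => H) →L[𝕜] PiLp 2 (fun _ : I => K)) where
  toFun T := (PiLp.continuousLinearEquiv 2 𝕜 fun _ : I => K).symm ∘L
    ContinuousLinearMap.pi fun i => T ∘L PiLp.proj 2 (fun _ : I => H) i
  map_add' _ _ := rfl
  map_smul' _ _ := rfl

@[simp]
lemma ampliation_apply (T : H →L[𝕜] K) (η : PiLp 2 fun _ : I => H) (i : I) :
    ampliation I T η i = T (η i) :=
  rfl

lemma ampliation_one : ampliation I (1 : H →L[𝕜] H) = 1 :=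
  rfl

lemma ampliation_comp (S : K →L[𝕜] L) (T : H →L[𝕜] K) :
    ampliation I (S ∘L T) = ampliation I S ∘L ampliation I T :=
  rfl

/-- The operator between finite `ℓ²`-sums whose block operator matrix is `E`. -/
noncomputable def blockOperator (E : J → I → (H →L[𝕜] K)) :
    PiLp 2 (fun _ : I => H) →L[𝕜] PiLp 2 (fun _ : J => K) :=
  (PiLp.continuousLinearEquiv 2 𝕜 fun _ : J => K).symm ∘L
    ContinuousLinearMap.pi fun j => ∑ i, E j i ∘L PiLp.proj 2 (fun _ : I => H) i

@[simp]
lemma blockOperator_apply (E : J → I → (H →L[𝕜] K)) (η : PiLp 2 fun _ : I => H) (j : J) :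
    blockOperator E η j = ∑ i, E j i (η i) := by
  simp [blockOperator, _root_.sum_apply]

lemma commute_blockOperator_ampliation {E : I → I → (H →L[𝕜] H)} {T : H →L[𝕜] H}
    (hT : ∀ i j, Commute T (E i j)) : Commute (blockOperator E) (ampliation I T) := by
  ext η i
  simp only [mul_apply_eq_comp, blockOperator_apply, ampliation_apply, map_sum]
  exact Finset.sum_congr rfl fun j _ => (DFunLike.congr_fun (hT i j) (η j)).symm

lemma inner_blockOperator (E : I → I → (H →L[𝕜] H)) (η : PiLp 2 fun _ : I => H) :
    inner 𝕜 η (blockOperator E η) = ∑ i, ∑ j, inner 𝕜 (η i) (E i j (η j)) := by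
  simp only [PiLp.inner_apply, blockOperator_apply, inner_sum]

variable [CompleteSpace H]

lemma adjoint_ampliation [CompleteSpace K] (T : H →L[𝕜] K) :
    adjoint (ampliation I T) = ampliation I (adjoint T) := by
  refine ((eq_adjoint_iff _ _).2 fun η θ => ?_).symm
  simp only [PiLp.inner_apply, ampliation_apply, adjoint_inner_left]

lemma intertwines_adjoint_proj (i : I) (T : H →L[𝕜] H) :
    Intertwines (adjoint (PiLp.proj 2 (fun _ : I => H) i)) T (ampliation I T) where
  comp_eq := by
    rw [← adjoint_adjoint T, ← adjoint_ampliation, ← adjoint_comp, ← adjoint_comp]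
    rfl
  comp_adjoint_eq := by
    rw [adjoint_adjoint]
    rfl

lemma adjoint_proj_apply [DecidableEq I] (i : I) (h : H) :
    adjoint (PiLp.proj (𝕜 := 𝕜) 2 (fun _ : I => H) i) h = PiLp.single 2 i h := by
  refine ext_inner_right 𝕜 fun η => ?_
  rw [adjoint_inner_left, PiLp.inner_apply, Finset.sum_eq_single i] <;>
    simp +contextual

lemma proj_comp_blockOperator_comp_adjoint_proj (E : J → I → (H →L[𝕜] K)) (j : J) (i : I) :
    PiLp.proj 2 (fun _ : J => K) j ∘L blockOperator E ∘L
      adjoint (PiLp.proj 2 (fun _ : I => H) i) = E j i := by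
  classical
  ext h
  simp only [ContinuousLinearMap.comp_apply, PiLp.proj_apply, blockOperator_apply,
    adjoint_proj_apply]
  rw [Finset.sum_eq_single i] <;> simp +contextual

end BlockOperators

section GramFactorization

variable {H : Type*} [NormedAddCommGroup H] [InnerProductSpace ℂ H]

lemma isPositive_of_forall_inner_nonneg {T : H →L[ℂ] H} (hT : ∀ η, 0 ≤ ⟪η, T η⟫) :
    T.IsPositive := by
  refine (isPositive_iff_complex T).2 fun η => ?_
  have hη : 0 ≤ ⟪T η, η⟫ := by
    rw [← inner_conj_symm, RCLike.conj_eq_iff_im.2 (RCLike.nonneg_iff.1 (hT η)).2]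
    exact hT η
  have hη' := RCLike.nonneg_iff.1 hη
  exact ⟨RCLike.conj_eq_iff_re.1 (RCLike.conj_eq_iff_im.2 hη'.2), hη'.1⟩

lemma sum_sum_inner_nonneg {I : Type*} [Fintype I] (v : I → H) :
    0 ≤ ∑ i, ∑ j, ⟪v i, v j⟫ := by
  simp only [← inner_sum, ← sum_inner]
  rw [inner_self_eq_norm_sq_to_K]
  positivity

variable [CompleteSpace H]

lemma exists_isSelfAdjoint_comp_self_eq {T : H →L[ℂ] H} (hT : T.IsPositive) :
    ∃ S : H →L[ℂ] H, IsSelfAdjoint S ∧ S ∘L S = T ∧ ∀ R, Commute T R → Commute S R :=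
  have hT' : 0 ≤ T := (nonneg_iff_isPositive T).2 hT
  ⟨CFC.sqrt T, .of_nonneg (CFC.sqrt_nonneg T), CFC.sqrt_mul_sqrt_self T hT',
    fun _ hR => hR.cfcₙ_nnreal NNReal.sqrt⟩

theorem exists_adjoint_comp_eq_of_sum_inner_nonneg {I : Type*} [Fintype I]
    {E : I → I → (H →L[ℂ] H)} (hE : ∀ ξ : I → H, 0 ≤ ∑ i, ∑ j, ⟪ξ i, E i j (ξ j)⟫) :
    ∃ V : I → (H →L[ℂ] PiLp 2 fun _ : I => H),
      (∀ i j, adjoint (V i) ∘L V j = E i j) ∧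
      ∀ T : H →L[ℂ] H, (∀ i j, Commute T (E i j)) → ∀ i, Intertwines (V i) T (ampliation I T) := by
  have hpos : (blockOperator E).IsPositive := isPositive_of_forall_inner_nonneg fun η => by
    rw [inner_blockOperator]
    exact hE η
  obtain ⟨S, hS, hSS, hSR⟩ := exists_isSelfAdjoint_comp_self_eq hpos
  refine ⟨fun i => S ∘L adjoint (PiLp.proj 2 _ i), fun i j => ?_, fun T hT i => ?_⟩
  · rw [adjoint_comp, adjoint_adjoint, hS.adjoint_eq, comp_assoc, ← comp_assoc S, hSS,
      proj_comp_blockOperator_comp_adjoint_proj]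
  · have hST : Commute S (ampliation I T) :=
      hSR _ (commute_blockOperator_ampliation hT)
    exact (Intertwines.of_commute_of_isSelfAdjoint hST hS).comp (intertwines_adjoint_proj i T)

end GramFactorization

section BlockOperatorIsometry

variable {X A H K : Type*} [Fintype A] [DecidableEq X]
  [NormedAddCommGroup H] [InnerProductSpace ℂ H] [CompleteSpace H]
  [NormedAddCommGroup K] [InnerProductSpace ℂ K] [CompleteSpace K]

/-- Block operator isometries over `(X, A)`, with entries indexed as `U a x`. -/
def IsBlockOperatorIsometry (U : A → X → (H →L[ℂ] K)) : Prop :=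
  ∀ x x', ∑ a, adjoint (U a x) ∘L U a x' = if x = x' then 1 else 0

lemma IsBlockOperatorIsometry.ampliation {U : A → X → (H →L[ℂ] K)}
    (hU : IsBlockOperatorIsometry U) (I : Type*) [Fintype I] :
    IsBlockOperatorIsometry fun a x => ampliation I (U a x) := fun x x' => by
  simp only [adjoint_ampliation, ← ampliation_comp]
  rw [← map_sum, hU, apply_ite (_root_.ampliation I), ampliation_one, map_zero]

lemma IsBlockOperatorIsometry.isStochasticOperatorMatrix [Fintype X] {U : A → X → (H →L[ℂ] K)}
    (hU : IsBlockOperatorIsometry U) :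
    IsStochasticOperatorMatrix fun x x' a a' => adjoint (U a x) ∘L U a' x' := by
  refine ⟨fun ξ => ?_, hU⟩
  simp only [ContinuousLinearMap.comp_apply, adjoint_inner_right]
  exact sum_sum_inner_nonneg fun p : X × A => U p.2 p.1 (ξ p)

theorem IsStochasticOperatorMatrix.exists_isBlockOperatorIsometry [Fintype X]
    {E : X → X → A → A → (H →L[ℂ] H)} (hE : IsStochasticOperatorMatrix E) :
    ∃ U : A → X → (H →L[ℂ] PiLp 2 fun _ : X × A => H), IsBlockOperatorIsometry U ∧
      (∀ x x' a a', adjoint (U a x) ∘L U a' x' = E x x' a a') ∧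
      ∀ T : H →L[ℂ] H, (∀ x x' a a', Commute T (E x x' a a')) →
        ∀ a x, Intertwines (U a x) T (_root_.ampliation (X × A) T) := by
  obtain ⟨W, hW, hWT⟩ := exists_adjoint_comp_eq_of_sum_inner_nonneg hE.1
  refine ⟨fun a x => W (x, a), fun x x' => ?_, fun x x' a a' => hW (x, a) (x', a'),
    fun T hT a x => hWT T (fun p q => hT p.1 q.1 p.2 q.2) (x, a)⟩
  simp only [hW, hE.2]

end BlockOperatorIsometry

section KrausMap

variable {𝕜 H K B : Type*} [RCLike 𝕜] [Fintype B]
  [NormedAddCommGroup H] [InnerProductSpace 𝕜 H] [CompleteSpace H]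
  [NormedAddCommGroup K] [InnerProductSpace 𝕜 K] [CompleteSpace K]

/-- The completely positive map `T ↦ ∑ b, v(b)⋆ T v(b)` with Kraus operators `v`. -/
noncomputable def krausMap (v : B → (H →L[𝕜] K)) : (K →L[𝕜] K) →ₗ[𝕜] (H →L[𝕜] H) where
  toFun T := ∑ b, adjoint (v b) ∘L T ∘L v b
  map_add' S T := by simp only [add_comp, comp_add, Finset.sum_add_distrib]
  map_smul' c T := by simp only [smul_comp, comp_smul, Finset.smul_sum, RingHom.id_apply]

lemma krausMap_apply (v : B → (H →L[𝕜] K)) (T : K →L[𝕜] K) :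
    krausMap v T = ∑ b, adjoint (v b) ∘L T ∘L v b :=
  rfl

lemma krausMap_one (v : B → (H →L[𝕜] K)) : krausMap v 1 = ∑ b, adjoint (v b) ∘L v b :=
  rfl

lemma inner_krausMap (v : B → (H →L[𝕜] K)) (T : K →L[𝕜] K) (h h' : H) :
    inner 𝕜 h (krausMap v T h') = ∑ b, inner 𝕜 (v b h) (T (v b h')) := by
  simp only [krausMap_apply, _root_.sum_apply, inner_sum,
    ContinuousLinearMap.comp_apply, adjoint_inner_right]

theorem intertwines_krausMap {v : B → (H →L[𝕜] K)} (hv : krausMap v 1 = 1)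
    {w : H →L[𝕜] K} {T : K →L[𝕜] K} (hwv : ∀ b, Commute T (w ∘L adjoint (v b)))
    (hvw : ∀ b, Commute T (v b ∘L adjoint w)) : Intertwines w (krausMap v T) T where
  comp_eq :=
    calc w ∘L krausMap v T
      _ = ∑ b, ((w ∘L adjoint (v b)) ∘L T) ∘L v b := by
        simp only [krausMap_apply, comp_finsetSum, comp_assoc]
      _ = ∑ b, (T ∘L w ∘L adjoint (v b)) ∘L v b :=
        Finset.sum_congr rfl fun b _ => congrArg (· ∘L v b) (hwv b).symm.eq
      _ = (T ∘L w) ∘L krausMap v 1 := by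
        simp only [krausMap_one, comp_finsetSum, comp_assoc]
      _ = T ∘L w := by rw [hv]; rfl
  comp_adjoint_eq :=
    calc krausMap v T ∘L adjoint w
      _ = ∑ b, adjoint (v b) ∘L T ∘L v b ∘L adjoint w := by
        simp only [krausMap_apply, finsetSum_comp, comp_assoc]
      _ = ∑ b, adjoint (v b) ∘L (v b ∘L adjoint w) ∘L T :=
        Finset.sum_congr rfl fun b _ => congrArg (adjoint (v b) ∘L ·) (hvw b).eq
      _ = krausMap v 1 ∘L adjoint w ∘L T := by
        simp only [krausMap_one, finsetSum_comp, comp_assoc]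
      _ = adjoint w ∘L T := by rw [hv]; rfl

end KrausMap

lemma IsStochasticOperatorMatrix.krausMap {X A B H K : Type*}
    [Fintype X] [Fintype A] [Fintype B] [DecidableEq X]
    [NormedAddCommGroup H] [InnerProductSpace ℂ H] [CompleteSpace H]
    [NormedAddCommGroup K] [InnerProductSpace ℂ K] [CompleteSpace K]
    {E : X → X → A → A → (K →L[ℂ] K)} (hE : IsStochasticOperatorMatrix E)
    {v : B → (H →L[ℂ] K)} (hv : krausMap v 1 = 1) :
    IsStochasticOperatorMatrix fun x x' a a' => krausMap v (E x x' a a') := by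
  refine ⟨fun ξ => ?_, fun x x' => ?_⟩
  · simp only [inner_krausMap, Finset.sum_comm (t := (Finset.univ : Finset B))]
    exact Finset.sum_nonneg fun b _ => hE.1 fun p => v b (ξ p)
  · rw [← map_sum, hE.2, apply_ite (_root_.krausMap v), hv, map_zero]

/-- A linear map `Γ : M_{X×Y} → M_{A×B}` is a quantum commuting QNS
correlation iff it arises from a pair of semi-commuting block operator isometries and
a unit vector. -/
theorem statement11
    {X Y A B : Type} [Fintype X] [Fintype Y] [Fintype A] [Fintype B]
    [Nonempty X] [Nonempty Y] [Nonempty A] [Nonempty B]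
    [DecidableEq X] [DecidableEq Y] [DecidableEq A] [DecidableEq B]
    (Γ : Matrix (X × Y) (X × Y) ℂ →ₗ[ℂ] Matrix (A × B) (A × B) ℂ) :
    (∃ (ℍ : HilbertC) (ξ : ℍ.carrier)
        (E : X → X → A → A → (ℍ.carrier →L[ℂ] ℍ.carrier))
        (F : Y → Y → B → B → (ℍ.carrier →L[ℂ] ℍ.carrier)),
        ‖ξ‖ = 1 ∧
        IsStochasticOperatorMatrix E ∧ IsStochasticOperatorMatrix F ∧
        (∀ (x x' : X) (y y' : Y) (a a' : A) (b b' : B),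
          Commute (E x x' a a') (F y y' b b')) ∧
        (∀ (x x' : X) (y y' : Y),
          Γ ((Matrix.single x x' (1 : ℂ)) ⊗ₖ (Matrix.single y y' (1 : ℂ)))
            = Matrix.of fun p q =>
                (⟪ξ, ((E x x' p.1 q.1) ∘L (F y y' p.2 q.2)) ξ⟫ : ℂ)))
    ↔
    (∃ (ℍ 𝕂 𝕃 : HilbertC)
        (U : A → X → (𝕂.carrier →L[ℂ] 𝕃.carrier))
        (V : B → Y → (ℍ.carrier →L[ℂ] 𝕂.carrier))
        (ζ : ℍ.carrier),
        (∀ x x' : X, ∑ a : A, (adjoint (U a x)) ∘L (U a x') = if x = x' then 1 else 0) ∧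
        (∀ y y' : Y, ∑ b : B, (adjoint (V b y)) ∘L (V b y') = if y = y' then 1 else 0) ∧
        (∀ (x x' : X) (y y' : Y) (a a' : A) (b b' : B),
          Commute ((adjoint (U a x)) ∘L (U a' x')) ((V b y) ∘L (adjoint (V b' y')))) ∧
        ‖ζ‖ = 1 ∧
        (∀ (x x' : X) (y y' : Y),
          Γ ((Matrix.single x x' (1 : ℂ)) ⊗ₖ (Matrix.single y y' (1 : ℂ)))
            = Matrix.of fun p q =>
                (⟪(U p.1 x) ((V p.2 y) ζ), (U q.1 x') ((V q.2 y') ζ)⟫ : ℂ))) := by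
  constructor
  · rintro ⟨ℍ, ξ, E, F, hξ, hE, hF, hEF, hΓ⟩
    obtain ⟨W, hW, hWE, -⟩ := hE.exists_isBlockOperatorIsometry
    obtain ⟨V, hV, hVF, hVT⟩ := hF.exists_isBlockOperatorIsometry
    have hVE (x x' a a' b y) : Intertwines (V b y) (E x x' a a')
        (adjoint (ampliation (Y × B) (W a x)) ∘L ampliation (Y × B) (W a' x')) := by
      rw [adjoint_ampliation, ← ampliation_comp, hWE]
      exact hVT _ (fun y y' b b' => hEF x x' y y' a a' b b') b y
    refine ⟨ℍ, ⟨PiLp 2 fun _ : Y × B => ℍ.carrier⟩,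
      ⟨PiLp 2 fun _ : Y × B => PiLp 2 fun _ : X × A => ℍ.carrier⟩,
      fun a x => ampliation (Y × B) (W a x), V, ξ, hW.ampliation _, hV,
      fun x x' y y' a a' b b' => (hVE ..).commute_comp_adjoint (hVE ..), hξ, fun x x' y y' => ?_⟩
    simp only [hΓ, ← hVF, (hVE ..).inner_comp_adjoint_comp]
  · rintro ⟨ℍ, 𝕂, 𝕃, U, V, ζ, hU, hV, hUV, hζ, hΓ⟩
    obtain ⟨y₀⟩ := ‹Nonempty Y›
    have hv : krausMap (V · y₀) 1 = 1 := (hV y₀ y₀).trans (if_pos rfl)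
    have hVE (x x' a a' b y) : Intertwines (V b y)
        (krausMap (V · y₀) (adjoint (U a x) ∘L U a' x')) (adjoint (U a x) ∘L U a' x') :=
      intertwines_krausMap hv (fun b' => hUV ..) (fun b' => hUV ..)
    refine ⟨ℍ, ζ, fun x x' a a' => krausMap (V · y₀) (adjoint (U a x) ∘L U a' x'),
      fun y y' b b' => adjoint (V b y) ∘L V b' y', hζ,
      .krausMap (IsBlockOperatorIsometry.isStochasticOperatorMatrix hU) hv,
      IsBlockOperatorIsometry.isStochasticOperatorMatrix hV,
      fun x x' y y' a a' b b' => (hVE ..).commute_adjoint_comp (hVE ..), fun x x' y y' => ?_⟩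
    simp only [hΓ, (hVE ..).inner_comp_adjoint_comp]
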